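/- The series ∑_{n=0}^∞ ((1)_n^5 / ((3/2)_n (5/3)_n (4/3)_n (7/4)_n (5/4)_n)) · (-16/27)^n · (172n² + 269n + 106) converges and equals 63·ζ(3). -/

import Mathlib

noncomputable def poch (x : ℝ) (n : ℕ) : ℝ := ∏ i ∈ Finset.range n, (x + i)

noncomputable def zeta3 : ℝ := ∑' n : ℕ, 1 / ((n : ℝ) + 1) ^ 3

/-!
The proof is a Wilf–Zeilberger argument. The functions `wzF` and `wzG` below satisfy
`F (n + 1) k - F n k = G n (k + 1) - G n k`. Summing over `k` gives
`∑ₖ F n k - ∑ₖ F (n + 1) k = G n 0`, and summing over `n` then gives `∑ₙ G n 0 = ∑ₖ F 0 k`.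
Here `72 * G n 0` is the `n`-th term of the series in question, while `F 0 k = 1 / (2 * k + 1) ^ 3`,
so that `∑ₖ F 0 k = 7 / 8 * ζ(3)`.
-/

open Filter Topology

section WilfZeilberger

variable {E : Type*} [AddCommGroup E] [TopologicalSpace E] [IsTopologicalAddGroup E] [T2Space E]

theorem tsum_sub_tsum_eq_of_sub_eq_sub {f f' g : ℕ → E} (hf : Summable f) (hf' : Summable f')
    (hg : Tendsto g atTop (𝓝 0)) (hfg : ∀ k, f' k - f k = g (k + 1) - g k) :
    ∑' k, f k - ∑' k, f' k = g 0 := by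
  have partial_sums : Tendsto (fun K ↦ g K - g 0) atTop (𝓝 (∑' k, f' k - ∑' k, f k)) := by
    simpa only [hfg, Finset.sum_range_sub] using (hf'.hasSum.sub hf.hasSum).tendsto_sum_nat
  have limit_eq := tendsto_nhds_unique partial_sums (hg.sub_const (g 0))
  rw [← neg_sub, limit_eq, zero_sub, neg_neg]

theorem hasSum_of_wilfZeilberger {F G : ℕ → ℕ → E} (hF : ∀ n, Summable (F n))
    (hF_lim : Tendsto (fun n ↦ ∑' k, F n k) atTop (𝓝 0)) (hG : Summable fun n ↦ G n 0)
    (hG_lim : ∀ n, Tendsto (G n) atTop (𝓝 0))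
    (hFG : ∀ n k, F (n + 1) k - F n k = G n (k + 1) - G n k) :
    HasSum (fun n ↦ G n 0) (∑' k, F 0 k) := by
  have G_zero_eq (n : ℕ) : G n 0 = ∑' k, F n k - ∑' k, F (n + 1) k :=
    (tsum_sub_tsum_eq_of_sub_eq_sub (hF n) (hF (n + 1)) (hG_lim n) (hFG n)).symm
  rw [hG.hasSum_iff_tendsto_nat]
  simpa only [G_zero_eq, Finset.sum_range_sub', sub_zero] using hF_lim.const_sub (∑' k, F 0 k)

end WilfZeilberger

section OddReciprocals

variable {s : ℕ}

theorem summable_one_div_add_one_pow (hs : 1 < s) :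
    Summable fun n : ℕ ↦ 1 / ((n : ℝ) + 1) ^ s := by
  simpa only [Nat.cast_add, Nat.cast_one] using
    (summable_nat_add_iff 1).2 (Real.summable_one_div_nat_pow.2 hs)

theorem summable_one_div_odd_pow (hs : 1 < s) :
    Summable fun k : ℕ ↦ 1 / (2 * (k : ℝ) + 1) ^ s := by
  simpa [Function.comp_def] using
    (summable_one_div_add_one_pow hs).comp_injective (mul_right_injective₀ (two_ne_zero' ℕ))

theorem tsum_one_div_odd_pow (hs : 1 < s) :
    ∑' k : ℕ, 1 / (2 * (k : ℝ) + 1) ^ s = (1 - 1 / 2 ^ s) * ∑' n : ℕ, 1 / ((n : ℝ) + 1) ^ s := by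
  have at_odd (k : ℕ) :
      1 / (((2 * k + 1 : ℕ) : ℝ) + 1) ^ s = 1 / 2 ^ s * (1 / ((k : ℝ) + 1) ^ s) := by
    rw [one_div_mul_one_div, ← mul_pow]
    push_cast
    ring
  have split := tsum_even_add_odd (f := fun n : ℕ ↦ 1 / ((n : ℝ) + 1) ^ s)
    (by simpa using summable_one_div_odd_pow hs)
    (by simpa only [at_odd] using (summable_one_div_add_one_pow hs).mul_left (1 / 2 ^ s))
  simp only [at_odd, tsum_mul_left, Nat.cast_mul, Nat.cast_ofNat] at split
  linarith

end OddReciprocals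

section Pochhammer

variable {x y : ℝ} (n : ℕ)

theorem poch_zero (x : ℝ) : poch x 0 = 1 := Finset.prod_range_zero _

theorem poch_succ (x : ℝ) : poch x (n + 1) = poch x n * (x + n) := Finset.prod_range_succ _ n

theorem poch_succ' (x : ℝ) : poch x (n + 1) = x * poch (x + 1) n := by
  simp only [poch, Finset.prod_range_succ', Nat.cast_add, Nat.cast_one, Nat.cast_zero, add_zero,
    mul_comm x, add_assoc, add_comm (1 : ℝ)]

theorem poch_add_one (hx : x ≠ 0) : poch (x + 1) n = poch x n * (x + n) / x := by
  rw [eq_div_iff hx, ← poch_succ, poch_succ', mul_comm]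

theorem poch_pos (hx : 0 < x) : 0 < poch x n :=
  Finset.prod_pos fun _ _ ↦ by positivity

theorem abs_poch_le_poch (h : ∀ i : ℕ, |x + i| ≤ y + i) : |poch x n| ≤ poch y n := by
  rw [poch, Finset.abs_prod]
  exact Finset.prod_le_prod (fun _ _ ↦ abs_nonneg _) fun i _ ↦ h i

theorem poch_le_poch (hx : 0 ≤ x) (hxy : x ≤ y) : poch x n ≤ poch y n :=
  Finset.prod_le_prod (fun _ _ ↦ by positivity) fun _ _ ↦ by gcongr

theorem poch_one_half_mul (k : ℕ) : poch (1 / 2) k * (2 * k + 1) = poch (3 / 2) k := by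
  rw [show (3 / 2 : ℝ) = 1 / 2 + 1 by norm_num, poch_add_one k (by norm_num)]
  ring

end Pochhammer

/-- The hypergeometric factor of the series: the summand without its quadratic polynomial. -/
noncomputable def hyperTerm (n : ℕ) : ℝ :=
  poch 1 n ^ 5 /
    (poch (3 / 2) n * poch (5 / 3) n * poch (4 / 3) n * poch (7 / 4) n * poch (5 / 4) n) *
    (-16 / 27 : ℝ) ^ n

theorem hyperTerm_zero : hyperTerm 0 = 1 := by simp [hyperTerm, poch_zero]

theorem hyperTerm_succ (n : ℕ) :
    hyperTerm (n + 1) = hyperTerm n * (-16 / 27 * (n + 1) ^ 5 /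
      ((3 / 2 + n) * (5 / 3 + n) * (4 / 3 + n) * (7 / 4 + n) * (5 / 4 + n))) := by
  simp only [hyperTerm, poch_succ, pow_succ, div_eq_mul_inv, mul_inv]
  ring

theorem abs_hyperTerm_le (n : ℕ) : |hyperTerm n| ≤ (16 / 27) ^ n := by
  have numerator_pos : 0 < poch 1 n ^ 5 := pow_pos (poch_pos n one_pos) 5
  have numerator_le : poch 1 n ^ 5 ≤
      poch (3 / 2) n * poch (5 / 3) n * poch (4 / 3) n * poch (7 / 4) n * poch (5 / 4) n := by
    simp only [poch, ← Finset.prod_pow, ← Finset.prod_mul_distrib]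
    refine Finset.prod_le_prod (fun _ _ ↦ by positivity) fun i _ ↦ ?_
    simp only [pow_succ, pow_zero, one_mul]
    gcongr <;> norm_num
  have denominator_pos := numerator_pos.trans_le numerator_le
  rw [hyperTerm, abs_mul, abs_of_pos (div_pos numerator_pos denominator_pos), abs_pow,
    show |(-16 / 27 : ℝ)| = 16 / 27 by norm_num [abs_div]]
  exact mul_le_of_le_one_left (by positivity) ((div_le_one denominator_pos).2 numerator_le)

theorem summable_pow_mul_hyperTerm (j : ℕ) : Summable fun n : ℕ ↦ (n : ℝ) ^ j * hyperTerm n := by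
  have geometric : Summable fun n : ℕ ↦ (n : ℝ) ^ j * (16 / 27 : ℝ) ^ n :=
    summable_pow_mul_geometric_of_norm_lt_one j (by norm_num [abs_div])
  refine geometric.of_norm_bounded fun n ↦ ?_
  rw [norm_mul, norm_pow, RCLike.norm_natCast]
  exact mul_le_mul_of_nonneg_left (abs_hyperTerm_le n) (by positivity)

theorem summable_hyperTerm_mul_quadratic (a b c : ℝ) :
    Summable fun n : ℕ ↦ hyperTerm n * (a * (n : ℝ) ^ 2 + b * n + c) :=
  ((((summable_pow_mul_hyperTerm 2).mul_left a).add
    ((summable_pow_mul_hyperTerm 1).mul_left b)).add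
      ((summable_pow_mul_hyperTerm 0).mul_left c)).congr fun n ↦ by ring

/-- The part of the Wilf–Zeilberger pair depending on `n` only. Its rational factor is forced by
requiring `wzG n 0` to be a constant multiple of the summand. -/
noncomputable def wzFactor (n : ℕ) : ℝ :=
  hyperTerm n * ((3 * n + 1) * (3 * n + 2) * (4 * n + 3) / (6 * (2 * n + 1) ^ 2))

theorem wzFactor_zero : wzFactor 0 = 1 := by norm_num [wzFactor, hyperTerm_zero]

theorem wzFactor_succ (n : ℕ) :
    wzFactor (n + 1) = wzFactor n * (-512 * (n + 1) ^ 5 * (2 * n + 1) ^ 2 /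
      (3 * (3 * n + 1) * (3 * n + 2) * (2 * n + 3) ^ 3 * (4 * n + 3) * (4 * n + 5))) := by
  rw [wzFactor, wzFactor, hyperTerm_succ]
  push_cast
  field_simp
  ring

theorem abs_wzFactor_le (n : ℕ) : |wzFactor n| ≤ 2 * (n + 1) * |hyperTerm n| := by
  have rational_le : ((3 * n + 1) * (3 * n + 2) * (4 * n + 3) / (6 * (2 * n + 1) ^ 2) : ℝ) ≤
      2 * (n + 1) := by
    rw [div_le_iff₀ (by positivity)]
    have : (0 : ℝ) ≤ n := n.cast_nonneg
    nlinarith [pow_nonneg this 2, pow_nonneg this 3]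
  rw [wzFactor, abs_mul, mul_comm, abs_of_nonneg (a := _ / _) (by positivity)]
  gcongr

/-- The hypergeometric factor common to both members of the Wilf–Zeilberger pair. Up to `wzFactor`,
`(a + 2 * k) * wzKernel n k` is the well-poised term with `a = n + 1`, numerator parameters
`1 / 2, 1 / 2, 1 / 2, 1 / 2 - n` and denominator parameters `1 + a - b` for each such `b`. -/
noncomputable def wzKernel (n k : ℕ) : ℝ :=
  wzFactor n * (poch (1 / 2) k ^ 3 * poch (1 / 2 - n) k /
    (poch (3 / 2 + n) k ^ 3 * poch (3 / 2 + 2 * n) k))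

theorem wzKernel_zero_right (n : ℕ) : wzKernel n 0 = wzFactor n := by simp [wzKernel, poch_zero]

theorem wzKernel_zero_left (k : ℕ) : wzKernel 0 k = 1 / (2 * (k : ℝ) + 1) ^ 4 := by
  have := poch_pos k (show (0 : ℝ) < 1 / 2 by norm_num)
  simp only [wzKernel, wzFactor_zero, Nat.cast_zero, mul_zero, add_zero, sub_zero,
    ← poch_one_half_mul]
  field_simp

theorem wzKernel_succ_right (n k : ℕ) :
    wzKernel n (k + 1) = wzKernel n k * ((2 * k + 1) ^ 3 * (2 * k + 1 - 2 * n) /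
      ((2 * n + 2 * k + 3) ^ 3 * (4 * n + 2 * k + 3))) := by
  have := poch_pos k (show (0 : ℝ) < 3 / 2 + n by positivity)
  have := poch_pos k (show (0 : ℝ) < 3 / 2 + 2 * n by positivity)
  simp only [wzKernel, poch_succ]
  field_simp
  ring

theorem two_mul_add_one_sub_two_mul_ne_zero (n k : ℕ) : (2 * n + 1 - 2 * k : ℝ) ≠ 0 := by
  rw [sub_ne_zero]
  exact_mod_cast (by omega : 2 * n + 1 ≠ 2 * k)

theorem wzKernel_succ_left (n k : ℕ) :
    wzKernel (n + 1) k = wzKernel n k * (-512 * (n + 1) ^ 5 * (2 * n + 1) ^ 3 /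
      (3 * (3 * n + 1) * (3 * n + 2) * (2 * n + 1 - 2 * k) * (2 * n + 2 * k + 3) ^ 3 *
        (4 * n + 2 * k + 3) * (4 * n + 2 * k + 5))) := by
  have := poch_pos k (show (0 : ℝ) < 3 / 2 + n by positivity)
  have := poch_pos k (show (0 : ℝ) < 3 / 2 + 2 * n by positivity)
  have shift_one : poch (3 / 2 + (n + 1 : ℕ)) k =
      poch (3 / 2 + n) k * ((2 * n + 2 * k + 3) / (2 * n + 3)) := by
    rw [show (3 / 2 + (n + 1 : ℕ) : ℝ) = 3 / 2 + n + 1 by push_cast; ring,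
      poch_add_one k (by positivity)]
    field_simp
    ring
  have shift_two : poch (3 / 2 + 2 * (n + 1 : ℕ)) k = poch (3 / 2 + 2 * n) k *
      ((4 * n + 2 * k + 3) * (4 * n + 2 * k + 5) / ((4 * n + 3) * (4 * n + 5))) := by
    rw [show (3 / 2 + 2 * (n + 1 : ℕ) : ℝ) = 3 / 2 + 2 * n + 1 + 1 by push_cast; ring,
      poch_add_one k (by positivity), poch_add_one k (by positivity)]
    field_simp
    ring
  have unshift : poch (1 / 2 - n) k =
      poch (1 / 2 - (n + 1 : ℕ)) k * ((2 * n + 1 - 2 * k) / (2 * n + 1)) := by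
    have base_eq : (1 / 2 - (n + 1 : ℕ) : ℝ) = -((2 * n + 1) / 2) := by push_cast; ring
    rw [show (1 / 2 - n : ℝ) = 1 / 2 - (n + 1 : ℕ) + 1 by push_cast; ring, base_eq,
      poch_add_one k (neg_ne_zero.2 (by positivity))]
    field_simp
    ring
  have := two_mul_add_one_sub_two_mul_ne_zero n k
  rw [wzKernel, wzKernel, wzFactor_succ, shift_one, shift_two, unshift]
  generalize (2 * n + 1 - 2 * k : ℝ) = d at *
  field_simp

theorem abs_wzKernel_le (n k : ℕ) : |wzKernel n k| ≤ |wzFactor n| / (2 * k + 1) ^ 3 := by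
  have half_pos := poch_pos k (show (0 : ℝ) < 1 / 2 by norm_num)
  have one_shift_pos := poch_pos k (show (0 : ℝ) < 3 / 2 + n by positivity)
  have two_shift_pos := poch_pos k (show (0 : ℝ) < 3 / 2 + 2 * n by positivity)
  have half_le : poch (1 / 2) k * (2 * k + 1) ≤ poch (3 / 2 + n) k := by
    rw [poch_one_half_mul]
    exact poch_le_poch k (by norm_num) (by simp)
  have abs_le : |poch (1 / 2 - n) k| ≤ poch (3 / 2 + 2 * n) k := by
    refine abs_poch_le_poch k fun i ↦ abs_le.2 ?_
    have : (0 : ℝ) ≤ n := n.cast_nonneg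
    have : (0 : ℝ) ≤ i := i.cast_nonneg
    constructor <;> linarith
  rw [wzKernel, abs_mul, div_eq_mul_one_div |wzFactor n|]
  gcongr
  rw [abs_div, abs_mul, abs_of_pos (pow_pos half_pos 3),
    abs_of_pos (mul_pos (pow_pos one_shift_pos 3) two_shift_pos),
    div_le_div_iff₀ (by positivity) (by positivity), one_mul]
  calc poch (1 / 2) k ^ 3 * |poch (1 / 2 - n) k| * (2 * k + 1) ^ 3
      = (poch (1 / 2) k * (2 * k + 1)) ^ 3 * |poch (1 / 2 - n) k| := by ring
    _ ≤ poch (3 / 2 + n) k ^ 3 * poch (3 / 2 + 2 * n) k := by gcongr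

section Certificate

variable {R : Type*} [CommRing R]

/-- The numerator of the rational certificate `wzG n k / wzKernel n k`. It is defined over any
commutative ring so that it can also be read as a polynomial in `k`. -/
def wzNumerator (n k : R) : R :=
  (2 * n + 1) ^ 3 * (172 * n ^ 2 + 269 * n + 106)
    + 6 * (2 * n + 1) ^ 2 * (11 * n ^ 2 + 11 * n + 2) * (2 * k)
    - 6 * (2 * n + 1) * (19 * n ^ 2 + 28 * n + 10) * (2 * k) ^ 2
    - 6 * (3 * n + 2) * (5 * n + 3) * (2 * k) ^ 3
    - 3 * (3 * n + 2) * (2 * k) ^ 4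

/-- The denominator of the rational certificate `wzG n k / wzKernel n k`, over any commutative ring
for the same reason as `wzNumerator`. -/
def wzDenominator (n k : R) : R :=
  12 * (3 * n + 1) * (3 * n + 2) * (2 * n + 1 - 2 * k) * (4 * n + 2 * k + 3)

theorem wzNumerator_recurrence (n k : R) :
    (2 * k + 1) ^ 3 * (2 * n + 1 - 2 * k) * wzNumerator n (k + 1)
        + (2 * n + 2 * k + 3) ^ 3 * (4 * n + 2 * k + 5) * wzNumerator n k =
      2048 * (n + 2 * k + 2) * (n + 1) ^ 5 * (2 * n + 1) ^ 3
        + (n + 2 * k + 1) *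
          ((2 * n + 2 * k + 3) ^ 3 * (4 * n + 2 * k + 5) * wzDenominator n k) := by
  unfold wzNumerator wzDenominator
  ring

theorem wzDenominator_natCast_ne_zero (n k : ℕ) : wzDenominator (n : ℝ) k ≠ 0 := by
  have := two_mul_add_one_sub_two_mul_ne_zero n k
  unfold wzDenominator
  positivity

open Polynomial in
theorem tendsto_wzNumerator_div_wzDenominator_div (n : ℕ) :
    Tendsto (fun k : ℕ ↦ wzNumerator (n : ℝ) k / wzDenominator (n : ℝ) k / (2 * (k : ℝ) + 1) ^ 3)
      atTop (𝓝 0) := by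
  have natDegree_numerator : (wzNumerator (C (n : ℝ)) X).natDegree ≤ 4 := by
    unfold wzNumerator
    compute_degree
  have natDegree_denominator :
      (wzDenominator (C (n : ℝ)) X * (2 * X + 1) ^ 3).natDegree = 5 := by
    unfold wzDenominator
    compute_degree!
  have degree_lt :
      (wzNumerator (C (n : ℝ)) X).degree < (wzDenominator (C (n : ℝ)) X * (2 * X + 1) ^ 3).degree :=
    degree_lt_degree (by omega)
  simpa [wzNumerator, wzDenominator, div_div, Function.comp_def] using
    (div_tendsto_atTop_zero_of_degree_lt _ _ degree_lt).comp tendsto_natCast_atTop_atTop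

end Certificate

/-- The member of the Wilf–Zeilberger pair that is summed over `k`. -/
noncomputable def wzF (n k : ℕ) : ℝ := (n + 2 * k + 1) * wzKernel n k

/-- The member of the Wilf–Zeilberger pair whose values at `k = 0` are summed over `n`. -/
noncomputable def wzG (n k : ℕ) : ℝ :=
  wzKernel n k * (wzNumerator (n : ℝ) k / wzDenominator (n : ℝ) k)

theorem wzF_succ_left (n k : ℕ) :
    wzF (n + 1) k = wzKernel n k * (-2048 * (n + 2 * k + 2) * (n + 1) ^ 5 * (2 * n + 1) ^ 3 /
      ((2 * n + 2 * k + 3) ^ 3 * (4 * n + 2 * k + 5) * wzDenominator (n : ℝ) k)) := by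
  have := two_mul_add_one_sub_two_mul_ne_zero n k
  rw [wzF, wzKernel_succ_left, wzDenominator]
  generalize (2 * n + 1 - 2 * k : ℝ) = gap at *
  push_cast
  field_simp
  ring

theorem wzG_succ_right (n k : ℕ) :
    wzG n (k + 1) = wzKernel n k *
      (-(2 * k + 1) ^ 3 * (2 * n + 1 - 2 * k) * wzNumerator (n : ℝ) (k + 1) /
        ((2 * n + 2 * k + 3) ^ 3 * (4 * n + 2 * k + 5) * wzDenominator (n : ℝ) k)) := by
  have gap_ne := two_mul_add_one_sub_two_mul_ne_zero n k
  have next_gap_ne := two_mul_add_one_sub_two_mul_ne_zero n (k + 1)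
  rw [wzG, wzKernel_succ_right, wzDenominator, wzDenominator]
  push_cast at next_gap_ne ⊢
  rw [show (2 * k + 1 - 2 * n : ℝ) = -(2 * n + 1 - 2 * (k + 1)) by ring]
  generalize (2 * n + 1 - 2 * k : ℝ) = gap at *
  generalize (2 * n + 1 - 2 * (k + 1) : ℝ) = next_gap at *
  field_simp
  ring

theorem wzF_succ_sub_wzF (n k : ℕ) : wzF (n + 1) k - wzF n k = wzG n (k + 1) - wzG n k := by
  have recurrence := wzNumerator_recurrence (n : ℝ) k
  have denominator_ne := wzDenominator_natCast_ne_zero n k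
  rw [wzF_succ_left, wzG_succ_right]
  set M : ℝ := (2 * n + 2 * k + 3) ^ 3 * (4 * n + 2 * k + 5) * wzDenominator (n : ℝ) k with hM
  have M_ne : M ≠ 0 := by positivity
  have wzF_eq : wzF n k = wzKernel n k * ((n + 2 * k + 1) * M / M) := by
    rw [wzF, mul_div_cancel_right₀ _ M_ne, mul_comm]
  have wzG_eq : wzG n k = wzKernel n k *
      ((2 * n + 2 * k + 3) ^ 3 * (4 * n + 2 * k + 5) * wzNumerator (n : ℝ) k / M) := by
    rw [wzG, hM, mul_div_mul_left _ _ (by positivity)]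
  rw [wzF_eq, wzG_eq]
  linear_combination wzKernel n k / M * recurrence

theorem wzG_zero_right (n : ℕ) :
    72 * wzG n 0 = hyperTerm n * (172 * (n : ℝ) ^ 2 + 269 * n + 106) := by
  simp only [wzG, wzKernel_zero_right, wzFactor, wzNumerator, wzDenominator,
    Nat.cast_zero, mul_zero, add_zero, sub_zero]
  field_simp
  ring

theorem wzF_zero_left (k : ℕ) : wzF 0 k = 1 / (2 * (k : ℝ) + 1) ^ 3 := by
  rw [wzF, wzKernel_zero_left, Nat.cast_zero, zero_add]
  field_simp

theorem tsum_wzF_zero : ∑' k, wzF 0 k = 7 / 8 * zeta3 := by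
  simp only [wzF_zero_left, tsum_one_div_odd_pow (by norm_num : 1 < 3), zeta3]
  norm_num

theorem abs_wzF_le (n k : ℕ) :
    |wzF n k| ≤ |wzFactor n| * (n + 1) * (1 / (2 * (k : ℝ) + 1) ^ 2) := by
  have linear_le : (n + 2 * k + 1 : ℝ) ≤ (n + 1) * (2 * k + 1) := by
    have : (0 : ℝ) ≤ n * k := by positivity
    linarith
  calc |wzF n k| = (n + 2 * k + 1) * |wzKernel n k| := by
        rw [wzF, abs_mul, abs_of_pos (by positivity)]
    _ ≤ (n + 1) * (2 * k + 1) * (|wzFactor n| / (2 * k + 1) ^ 3) := by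
        gcongr
        exact abs_wzKernel_le n k
    _ = |wzFactor n| * (n + 1) * (1 / (2 * (k : ℝ) + 1) ^ 2) := by field_simp

theorem summable_wzF (n : ℕ) : Summable (wzF n) :=
  ((summable_one_div_odd_pow one_lt_two).mul_left _).of_norm_bounded (abs_wzF_le n)

theorem tendsto_tsum_wzF : Tendsto (fun n ↦ ∑' k, wzF n k) atTop (𝓝 0) := by
  set S : ℝ := ∑' k : ℕ, 1 / (2 * (k : ℝ) + 1) ^ 2
  have : 0 ≤ S := tsum_nonneg fun _ ↦ by positivity
  have abs_tsum_le (n : ℕ) :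
      ‖∑' k, wzF n k‖ ≤ 2 * |hyperTerm n * (1 * (n : ℝ) ^ 2 + 2 * n + 1)| * S := by
    calc ‖∑' k, wzF n k‖ ≤ |wzFactor n| * (n + 1) * S :=
          tsum_of_norm_bounded ((summable_one_div_odd_pow one_lt_two).hasSum.mul_left _)
            (abs_wzF_le n)
      _ ≤ 2 * (n + 1) * |hyperTerm n| * (n + 1) * S := by
          gcongr
          exact abs_wzFactor_le n
      _ = 2 * |hyperTerm n * (1 * (n : ℝ) ^ 2 + 2 * n + 1)| * S := by
          rw [abs_mul, abs_of_pos (a := 1 * (n : ℝ) ^ 2 + 2 * n + 1) (by positivity)]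
          ring
  refine squeeze_zero_norm abs_tsum_le ?_
  simpa using
    ((summable_hyperTerm_mul_quadratic 1 2 1).tendsto_atTop_zero.abs.const_mul 2).mul_const S

theorem tendsto_wzG (n : ℕ) : Tendsto (wzG n) atTop (𝓝 0) := by
  have abs_wzG_le (k : ℕ) : ‖wzG n k‖ ≤ |wzFactor n| *
      |wzNumerator (n : ℝ) k / wzDenominator (n : ℝ) k / (2 * (k : ℝ) + 1) ^ 3| := by
    set r : ℝ := wzNumerator (n : ℝ) k / wzDenominator (n : ℝ) k
    calc ‖wzG n k‖ = |wzKernel n k| * |r| := abs_mul _ _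
      _ ≤ |wzFactor n| / (2 * k + 1) ^ 3 * |r| := by
          gcongr
          exact abs_wzKernel_le n k
      _ = |wzFactor n| * |r / (2 * (k : ℝ) + 1) ^ 3| := by
          rw [abs_div r, abs_of_pos (a := (2 * (k : ℝ) + 1) ^ 3) (by positivity)]
          ring
  refine squeeze_zero_norm abs_wzG_le ?_
  simpa using (tendsto_wzNumerator_div_wzDenominator_div n).abs.const_mul |wzFactor n|

theorem stmt0 :
    HasSum (fun n : ℕ =>
      poch 1 n ^ 5 /
        (poch (3/2) n * poch (5/3) n * poch (4/3) n * poch (7/4) n * poch (5/4) n) *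
        (-16/27 : ℝ) ^ n * (172 * (n : ℝ) ^ 2 + 269 * n + 106))
      (63 * zeta3) := by
  have summable_wzG_zero : Summable fun n ↦ wzG n 0 := by
    rw [← summable_mul_left_iff (show (72 : ℝ) ≠ 0 by norm_num)]
    simpa only [wzG_zero_right] using summable_hyperTerm_mul_quadratic 172 269 106
  have hasSum_wzG_zero := hasSum_of_wilfZeilberger summable_wzF tendsto_tsum_wzF
    summable_wzG_zero tendsto_wzG wzF_succ_sub_wzF
  have hasSum_terms := hasSum_wzG_zero.mul_left 72
  simp only [wzG_zero_right, tsum_wzF_zero] at hasSum_terms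
  rw [show 63 * zeta3 = 72 * (7 / 8 * zeta3) by ring]
  exact hasSum_terms
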